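/- Let n be an arbitrary positive integer and let G be a graph on n vertices with ρ(G) > ρ(T_{n,2}). Then for every integer t with 3 ≤ t ≤ n/7, the graph G contains a cycle C_t of length t. -/

import Mathlib

open SimpleGraph Finset

attribute [local instance] Classical.propDecidable

/-- The spectral radius (largest adjacency eigenvalue) of a graph on `Fin n`. -/
noncomputable def adjSpectralRadius {n : ℕ} (G : SimpleGraph (Fin n)) : ℝ :=
  sSup (spectrum ℝ (G.adjMatrix ℝ))

/-- `G` contains a copy of `H` (a subgraph isomorphic to `H`). -/
def Contains {α β : Type*} (G : SimpleGraph α) (H : SimpleGraph β) : Prop :=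
  ∃ f : β ↪ α, ∀ a b, H.Adj a b → G.Adj (f a) (f b)

/-- The book `B_s`: `s` triangles sharing a common edge, i.e. `K_{2,s}` plus the
edge inside the part of size two. -/
def book (s : ℕ) : SimpleGraph (Fin 2 ⊕ Fin s) :=
  SimpleGraph.fromRel (fun x _ => x.isLeft = true)

/-- The theta graph `θ_{r+1} = θ(1,2,r+1)`: vertices `0,…,r+1` form a path of length
`r+1`, the edge `0 ~ (r+1)`, and vertex `r+2` is adjacent to `0` and `r+1`. -/
def theta (r : ℕ) : SimpleGraph (Fin (r + 3)) :=
  SimpleGraph.fromRel (fun x y =>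
    (x.val + 1 = y.val ∧ y.val ≤ r + 1) ∨
    (x.val = 0 ∧ y.val = r + 1) ∨
    (x.val = r + 2 ∧ (y.val = 0 ∨ y.val = r + 1)))

/-- The number of edges of a graph. -/
noncomputable def edgeCount {V : Type*} (G : SimpleGraph V) : ℕ := G.edgeSet.ncard

/-- The number of ordered pairs `(a,b) ∈ s × t` with `a ~ b`.  For disjoint `s` and `t`
this is the number `e(s,t)` of edges between `s` and `t`; for `s = t` it is `2·e(s)`. -/
noncomputable def ordPairs {V : Type*} (G : SimpleGraph V) (s t : Finset V) : ℕ :=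
  ((s ×ˢ t).filter fun p => G.Adj p.1 p.2).card

/-- The number of edges inside a vertex subset `s`. -/
noncomputable def edgesIn {V : Type*} (G : SimpleGraph V) (s : Finset V) : ℕ :=
  (G.induce (s : Set V)).edgeSet.ncard


section Spectral

lemma card_parity (n : ℕ) : ((Finset.range n).filter (fun i => i % 2 = 1)).card = n / 2 ∧
    ((Finset.range n).filter (fun i => i % 2 = 0)).card = (n + 1) / 2 := by
  induction n with
  | zero => simp
  | succ n ih =>
    rw [Finset.range_add_one, Finset.filter_insert, Finset.filter_insert]
    rcases Nat.mod_two_eq_zero_or_one n with h | h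
    · simp only [h]
      simp only [zero_ne_one, if_false, if_true]
      rw [Finset.card_insert_of_notMem (by simp), ih.1, ih.2]
      omega
    · simp only [h]
      simp only [one_ne_zero, if_false, if_true]
      rw [Finset.card_insert_of_notMem (by simp), ih.1, ih.2]
      omega

lemma turan_radius_ge (n : ℕ) (hn : 2 ≤ n) :
    Real.sqrt ((n ^ 2 / 4 : ℕ) : ℝ) ≤ adjSpectralRadius (turanGraph n 2) := by
  unfold adjSpectralRadius
  set M := (turanGraph n 2).adjMatrix ℝ with hM
  have hfin : (spectrum ℝ M).Finite := Matrix.finite_real_spectrum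
  suffices key : Real.sqrt ((n ^ 2 / 4 : ℕ) : ℝ) ≤ sSup (spectrum ℝ M) by
    convert key
  apply le_csSup hfin.bddAbove
  rw [← Matrix.spectrum_toLin', ← Module.End.hasEigenvalue_iff_mem_spectrum]
  set p : ℕ := (n + 1) / 2 with hp
  set q : ℕ := n / 2 with hq
  have hpq : n ^ 2 / 4 = p * q := by
    rcases Nat.even_or_odd' n with ⟨c, hc | hc⟩
    · have h1 : p = c := by omega
      have h2 : q = c := by omega
      rw [h1, h2, hc]
      have : (2 * c) ^ 2 = 4 * (c * c) := by ring
      omega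
    · have h1 : p = c + 1 := by omega
      have h2 : q = c := by omega
      rw [h1, h2, hc]
      have : (2 * c + 1) ^ 2 = 4 * ((c + 1) * c) + 1 := by ring
      omega
  have hp0 : (0 : ℝ) ≤ p := by positivity
  have hq0 : (0 : ℝ) ≤ q := by positivity
  let x : Fin n → ℝ := fun v => if v.val % 2 = 0 then Real.sqrt q else Real.sqrt p
  have hsum : ∀ r : ℕ, ∀ c : ℝ, (∑ w : Fin n, if w.val % 2 = r then c else 0)
      = (((Finset.range n).filter (fun i => i % 2 = r)).card : ℝ) * c := by
    intro r c
    rw [Fin.sum_univ_eq_sum_range (fun i => if i % 2 = r then c else 0) n,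
      ← Finset.sum_filter]
    simp
  apply Module.End.hasEigenvalue_of_hasEigenvector (x := x)
  rw [Module.End.hasEigenvector_iff]
  constructor
  · rw [Module.End.mem_eigenspace_iff]
    ext v
    rw [Matrix.toLin'_apply]
    simp only [Matrix.mulVec, dotProduct, Pi.smul_apply, smul_eq_mul, hM,
      SimpleGraph.adjMatrix_apply, turanGraph_adj]
    rw [hpq]
    push_cast
    rw [Real.sqrt_mul hp0]
    rcases Nat.mod_two_eq_zero_or_one v.val with h | h
    · have : ∀ w : Fin n, (if v.val % 2 ≠ w.val % 2 then (1 : ℝ) else 0) * x w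
          = if w.val % 2 = 1 then Real.sqrt p else 0 := by
        intro w
        rcases Nat.mod_two_eq_zero_or_one w.val with h' | h' <;> simp [x, h, h']
      rw [Finset.sum_congr rfl (fun w _ => this w), hsum, (card_parity n).1]
      simp only [x, h, if_true]
      rw [mul_assoc, Real.mul_self_sqrt hq0, mul_comm]
    · have : ∀ w : Fin n, (if v.val % 2 ≠ w.val % 2 then (1 : ℝ) else 0) * x w
          = if w.val % 2 = 0 then Real.sqrt q else 0 := by
        intro w
        rcases Nat.mod_two_eq_zero_or_one w.val with h' | h' <;> simp [x, h, h']
      rw [Finset.sum_congr rfl (fun w _ => this w), hsum, (card_parity n).2]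
      simp only [x, h, one_ne_zero, if_false]
      rw [mul_right_comm, Real.mul_self_sqrt hp0]
  · intro h
    have := congrFun h ⟨0, by omega⟩
    have hq1 : 0 < q := by omega
    simp [x] at this
    omega

lemma exists_vertex (n : ℕ) (G : SimpleGraph (Fin n)) (m : ℕ)
    (h : Real.sqrt (m : ℝ) < adjSpectralRadius G) :
    ∃ u : Fin n, m < ∑ v ∈ G.neighborFinset u, G.degree v := by
  unfold adjSpectralRadius at h
  have hne : (spectrum ℝ (G.adjMatrix ℝ)).Nonempty := by
    by_contra hne
    rw [Set.not_nonempty_iff_eq_empty] at hne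
    rw [hne, Real.sSup_empty] at h
    exact absurd h (not_lt.mpr (Real.sqrt_nonneg _))
  obtain ⟨μ, hμ, hlt⟩ := exists_lt_of_lt_csSup hne h
  rw [← Matrix.spectrum_toLin', ← Module.End.hasEigenvalue_iff_mem_spectrum] at hμ
  obtain ⟨x, hx⟩ := hμ.exists_hasEigenvector
  have hx0 := hx.2
  have hev : ∀ v, ∑ w ∈ G.neighborFinset v, x w = μ * x v := by
    intro v
    have := congrFun hx.apply_eq_smul v
    rw [Matrix.toLin'_apply] at this
    rw [SimpleGraph.adjMatrix_mulVec_apply] at this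
    simpa using this
  obtain ⟨v0, hv0⟩ : ∃ v, x v ≠ 0 := by
    by_contra hcon
    push Not at hcon
    exact hx0 (funext hcon)
  obtain ⟨u, -, hu⟩ := Finset.exists_max_image Finset.univ (fun v => |x v|) ⟨v0, Finset.mem_univ _⟩
  have hupos : 0 < |x u| := lt_of_lt_of_le (abs_pos.mpr hv0) (hu v0 (Finset.mem_univ _))
  refine ⟨u, ?_⟩
  have hμ0 : 0 ≤ μ := le_trans (Real.sqrt_nonneg _) hlt.le
  have hm : (m : ℝ) < μ ^ 2 := by
    have := Real.sq_sqrt (Nat.cast_nonneg (α := ℝ) m)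
    have h0 := Real.sqrt_nonneg (m : ℝ)
    nlinarith
  have h2 : μ ^ 2 * x u = ∑ v ∈ G.neighborFinset u, ∑ w ∈ G.neighborFinset v, x w := by
    rw [Finset.sum_congr rfl (fun v _ => hev v), ← Finset.mul_sum, hev u]
    ring
  have h3 : μ ^ 2 * |x u| ≤ (∑ v ∈ G.neighborFinset u, (G.degree v : ℝ)) * |x u| := by
    have : μ ^ 2 * |x u| = |μ ^ 2 * x u| := by
      rw [abs_mul, abs_of_nonneg (by positivity : (0 : ℝ) ≤ μ ^ 2)]
    rw [this, h2, Finset.sum_mul]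
    refine (Finset.abs_sum_le_sum_abs _ _).trans (Finset.sum_le_sum fun v _ => ?_)
    refine (Finset.abs_sum_le_sum_abs _ _).trans ?_
    refine (Finset.sum_le_card_nsmul _ _ _ (fun w _ => hu w (Finset.mem_univ _))).trans ?_
    simp
  have h4 := le_of_mul_le_mul_right h3 hupos
  have h5 : (m : ℝ) < ∑ v ∈ G.neighborFinset u, (G.degree v : ℝ) := lt_of_lt_of_le hm h4
  exact_mod_cast h5

end Spectral

section Counting

set_option linter.unusedSectionVars false

variable {V : Type*} [DecidableEq V]

/-- number of neighbours of `v` in `T` -/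
noncomputable def dg (G : SimpleGraph V) (v : V) (T : Finset V) : ℕ := (T.filter (G.Adj v)).card

/-- ordered adjacent pairs -/
noncomputable def EE (G : SimpleGraph V) (S T : Finset V) : ℕ := ∑ v ∈ S, dg G v T

lemma dg_eq_sum (G : SimpleGraph V) (v : V) (T : Finset V) :
    dg G v T = ∑ w ∈ T, if G.Adj v w then 1 else 0 := by
  unfold dg; rw [Finset.card_filter]

lemma EE_comm (G : SimpleGraph V) (S T : Finset V) : EE G S T = EE G T S := by
  unfold EE
  simp only [dg_eq_sum]
  rw [Finset.sum_comm]
  simp only [G.adj_comm]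

lemma dg_le_card (G : SimpleGraph V) (v : V) (T : Finset V) : dg G v T ≤ T.card :=
  Finset.card_filter_le _ _

lemma dg_mono (G : SimpleGraph V) (v : V) {S T : Finset V} (h : S ⊆ T) : dg G v S ≤ dg G v T :=
  Finset.card_le_card (Finset.filter_subset_filter _ h)

lemma dg_lt_card (G : SimpleGraph V) {v : V} {T : Finset V} (hv : v ∈ T) : dg G v T + 1 ≤ T.card := by
  have : dg G v T < T.card := by
    apply Finset.card_lt_card
    rw [Finset.filter_ssubset]
    exact ⟨v, hv, G.loopless.irrefl v⟩
  omega

lemma dg_union (G : SimpleGraph V) (v : V) {S T : Finset V} (h : Disjoint S T) :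
    dg G v (S ∪ T) = dg G v S + dg G v T := by
  simp only [dg_eq_sum]
  exact Finset.sum_union h

lemma EE_union_left (G : SimpleGraph V) {S T : Finset V} (U : Finset V) (h : Disjoint S T) :
    EE G (S ∪ T) U = EE G S U + EE G T U := Finset.sum_union h

lemma EE_union_right (G : SimpleGraph V) (U : Finset V) {S T : Finset V} (h : Disjoint S T) :
    EE G U (S ∪ T) = EE G U S + EE G U T := by
  rw [EE_comm, EE_union_left G U h, EE_comm G S, EE_comm G T]

lemma EE_le (G : SimpleGraph V) (S T : Finset V) (c : ℕ) (h : ∀ v ∈ S, dg G v T ≤ c) :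
    EE G S T ≤ S.card * c := by
  have := Finset.sum_le_card_nsmul S (fun v => dg G v T) c h
  simpa [EE] using this

lemma EE_erase_left (G : SimpleGraph V) {S : Finset V} (T : Finset V) {v : V} (hv : v ∈ S) :
    EE G S T = EE G (S.erase v) T + dg G v T := by
  unfold EE; rw [Finset.sum_erase_add _ _ hv]

lemma EE_erase_right (G : SimpleGraph V) (S : Finset V) {T : Finset V} {v : V} (hv : v ∈ T) :
    EE G S T = EE G S (T.erase v) + dg G v S := by
  rw [EE_comm, EE_erase_left G S hv, EE_comm]

lemma EE_erase_both (G : SimpleGraph V) {S : Finset V} {v : V} (hv : v ∈ S) :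
    EE G S S = EE G (S.erase v) (S.erase v) + 2 * dg G v S := by
  rw [EE_erase_left G S hv, EE_erase_right G (S.erase v) hv]
  have : dg G v (S.erase v) = dg G v S := by
    unfold dg
    congr 1
    ext w
    simp only [Finset.mem_filter, Finset.mem_erase]
    constructor
    · rintro ⟨⟨_, h⟩, h'⟩; exact ⟨h, h'⟩
    · rintro ⟨h, h'⟩; exact ⟨⟨h'.ne', h⟩, h'⟩
  omega

lemma exists_nb_notMem (G : SimpleGraph V) (v : V) (T F : Finset V) (h : (T ∩ F).card < dg G v T) :
    ∃ w ∈ T, G.Adj v w ∧ w ∉ F := by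
  by_contra hcon
  push Not at hcon
  have : T.filter (G.Adj v) ⊆ T ∩ F := by
    intro w hw
    rw [Finset.mem_filter] at hw
    exact Finset.mem_inter.mpr ⟨hw.1, hcon w hw.1 hw.2⟩
  have := Finset.card_le_card this
  unfold dg at h
  omega

/-- The pruned bipartite core. -/
lemma exists_core (G : SimpleGraph V) (k : ℕ) : ∀ (N : ℕ) (A B : Finset V), A.card + B.card = N →
    ∃ A0 ⊆ A, ∃ B0 ⊆ B, (∀ a ∈ A0, k ≤ dg G a B0) ∧ (∀ b ∈ B0, k + 1 ≤ dg G b A0) ∧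
      EE G A B + k * (A0.card + B0.card) ≤ A0.card * B0.card + k * (A.card + B.card) := by
  intro N
  induction N with
  | zero =>
    intro A B h
    refine ⟨A, le_rfl, B, le_rfl, ?_, ?_, ?_⟩
    · have : A = ∅ := Finset.card_eq_zero.mp (by omega)
      simp [this]
    · have : B = ∅ := Finset.card_eq_zero.mp (by omega)
      simp [this]
    · have := EE_le G A B B.card (fun v _ => dg_le_card G v B)
      omega
  | succ N ih =>
    intro A B h
    by_cases h1 : ∃ a ∈ A, dg G a B < k
    · obtain ⟨a, ha, hd⟩ := h1
      have hc := Finset.card_erase_add_one ha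
      obtain ⟨A0, hA, B0, hB, p1, p2, p3⟩ := ih (A.erase a) B (by omega)
      refine ⟨A0, hA.trans (Finset.erase_subset _ _), B0, hB, p1, p2, ?_⟩
      rw [EE_erase_left G B ha]
      rw [← hc]
      nlinarith
    by_cases h2 : ∃ b ∈ B, dg G b A ≤ k
    · obtain ⟨b, hb, hd⟩ := h2
      have hc := Finset.card_erase_add_one hb
      obtain ⟨A0, hA, B0, hB, p1, p2, p3⟩ := ih A (B.erase b) (by omega)
      refine ⟨A0, hA, B0, hB.trans (Finset.erase_subset _ _), p1, p2, ?_⟩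
      rw [EE_erase_right G A hb]
      rw [← hc]
      nlinarith
    push Not at h1 h2
    refine ⟨A, le_rfl, B, le_rfl, h1, fun b hb => h2 b hb, ?_⟩
    have := EE_le G A B B.card (fun v _ => dg_le_card G v B)
    omega

/-- a path, as a list of distinct vertices -/
def PL (G : SimpleGraph V) (l : List V) : Prop := l.IsChain G.Adj ∧ l.Nodup

lemma PL.cons {G : SimpleGraph V} {l : List V} {a b : V} (h : PL G l) (hb : l.head? = some b)
    (hab : G.Adj a b) (ha : a ∉ l) : PL G (a :: l) := by
  refine ⟨?_, List.nodup_cons.mpr ⟨ha, h.2⟩⟩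
  rw [List.isChain_cons]
  refine ⟨?_, h.1⟩
  intro y hy
  rw [hb] at hy
  simp at hy
  subst hy
  exact hab

lemma alt_path (G : SimpleGraph V) (k : ℕ) (A0 B0 : Finset V) (hdis : Disjoint A0 B0)
    (hA : ∀ a ∈ A0, k ≤ dg G a B0) (hB : ∀ b ∈ B0, k + 1 ≤ dg G b A0) :
    ∀ (j : ℕ) (l : List V) (a : V), PL G l → l.head? = some a → a ∈ A0 →
      (B0 ∩ l.toFinset).card + j ≤ k → (A0 ∩ l.toFinset).card + j ≤ k + 1 →
      ∃ l' : List V, PL G l' ∧ (∃ a' ∈ A0, l'.head? = some a') ∧ l'.getLast? = l.getLast? ∧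
        l'.length = l.length + 2 * j ∧ ∀ x ∈ l', x ∈ l ∨ x ∈ A0 ∨ x ∈ B0 := by
  intro j
  induction j with
  | zero =>
    intro l a hl hh ha _ _
    exact ⟨l, hl, ⟨a, ha, hh⟩, rfl, rfl, fun x hx => Or.inl hx⟩
  | succ j ih =>
    intro l a hl hh ha h1 h2
    obtain ⟨b, hbB, hab, hbl⟩ := exists_nb_notMem G a B0 l.toFinset (by have := hA a ha; omega)
    obtain ⟨c, hcA, hbc, hcl⟩ := exists_nb_notMem G b A0 l.toFinset (by have := hB b hbB; omega)
    rw [List.mem_toFinset] at hbl hcl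
    have hcb : c ≠ b := hbc.ne'
    have hP : PL G (b :: l) := hl.cons hh hab.symm hbl
    have hP2 : PL G (c :: b :: l) := hP.cons rfl hbc.symm (by simp [hcb, hcl])
    have hcB : c ∉ B0 := fun h => (Finset.disjoint_left.mp hdis) hcA h
    have hbA : b ∉ A0 := fun h => (Finset.disjoint_left.mp hdis) h hbB
    have e1 : (B0 ∩ (c :: b :: l).toFinset).card ≤ (B0 ∩ l.toFinset).card + 1 := by
      have : B0 ∩ (c :: b :: l).toFinset ⊆ insert b (B0 ∩ l.toFinset) := by
        intro x hx
        simp only [Finset.mem_inter, List.mem_toFinset, List.mem_cons, Finset.mem_insert] at hx ⊢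
        rcases hx with ⟨hx, rfl | rfl | h⟩
        · exact absurd hx hcB
        · exact Or.inl rfl
        · exact Or.inr ⟨hx, h⟩
      exact (Finset.card_le_card this).trans (Finset.card_insert_le _ _)
    have e2 : (A0 ∩ (c :: b :: l).toFinset).card ≤ (A0 ∩ l.toFinset).card + 1 := by
      have : A0 ∩ (c :: b :: l).toFinset ⊆ insert c (A0 ∩ l.toFinset) := by
        intro x hx
        simp only [Finset.mem_inter, List.mem_toFinset, List.mem_cons, Finset.mem_insert] at hx ⊢
        rcases hx with ⟨hx, rfl | rfl | h⟩
        · exact Or.inl rfl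
        · exact absurd hx hbA
        · exact Or.inr ⟨hx, h⟩
      exact (Finset.card_le_card this).trans (Finset.card_insert_le _ _)
    obtain ⟨l', q1, q2, q3, q4, q5⟩ := ih (c :: b :: l) c hP2 rfl hcA (by omega) (by omega)
    refine ⟨l', q1, q2, ?_, ?_, ?_⟩
    · rw [q3]
      cases l with
      | nil => simp at hh
      | cons x l => simp [List.getLast?_cons_cons]
    · rw [q4]; simp; ring
    · intro x hx
      rcases q5 x hx with h | h | h
      · simp only [List.mem_cons] at h
        rcases h with rfl | rfl | h
        · exact Or.inr (Or.inl hcA)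
        · exact Or.inr (Or.inr hbB)
        · exact Or.inl h
      · exact Or.inr (Or.inl h)
      · exact Or.inr (Or.inr h)

lemma contains_of_list (G : SimpleGraph V) (L : List V) (x y : V) (h : PL G L)
    (hx : L.head? = some x) (hy : L.getLast? = some y) (hxy : G.Adj x y) :
    Contains G (cycleGraph L.length) := by
  refine ⟨⟨fun i => L.get i, List.nodup_iff_injective_get.mp h.2⟩, ?_⟩
  have hlen : 0 < L.length := by
    cases L with
    | nil => simp at hx
    | cons => simp
  have hx' : L[0] = x := by
    rw [List.head?_eq_getElem?, List.getElem?_eq_getElem hlen] at hx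
    simpa using hx
  have hy' : L[L.length - 1]'(by omega) = y := by
    rw [List.getLast?_eq_getElem?, List.getElem?_eq_getElem (by omega)] at hy
    simpa using hy
  have key : ∀ a b : Fin L.length, (a - b).val = 1 → G.Adj (L.get a) (L.get b) := by
    intro a b hab
    rcases le_or_gt b a with hle | hlt
    · rw [Fin.coe_sub_iff_le.mpr hle] at hab
      have := List.isChain_iff_getElem.mp h.1 b.val (by omega)
      have e : b.val + 1 = a.val := by omega
      simp only [e] at this
      exact this.symm
    · rw [Fin.coe_sub_iff_lt.mpr hlt] at hab
      have e1 : a.val = 0 := by have := a.2; have := b.2; omega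
      have e2 : b.val = L.length - 1 := by have := a.2; have := b.2; omega
      simp only [List.get_eq_getElem, e1, e2, hx', hy']
      exact hxy
  intro a b hab
  rw [cycleGraph_adj'] at hab
  rcases hab with h | h
  · exact key a b h
  · exact (key b a h).symm

end Counting

section ErdosGallai

set_option linter.unusedSectionVars false

variable {V : Type*} [DecidableEq V]

/-- closing up a path with crossing chords and extending it by an outside vertex -/
lemma longer_path (G : SimpleGraph V) (l₁ l₂ : List V) (x y z t w v : V) (h : PL G (l₁ ++ l₂))
    (h1 : l₁.head? = some x) (h2 : l₁.getLast? = some y) (h3 : l₂.head? = some z)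
    (h4 : l₂.getLast? = some t) (hxz : G.Adj x z) (hyt : G.Adj y t)
    (hw : w ∉ l₁ ++ l₂) (hv : v ∈ l₁ ++ l₂) (hwv : G.Adj w v) :
    ∃ l : List V, PL G l ∧ l.length = (l₁ ++ l₂).length + 1 ∧ ∀ a ∈ l, a = w ∨ a ∈ l₁ ++ l₂ := by
  obtain ⟨hch, hnd⟩ := h
  have hch' := List.isChain_append.mp hch
  have hc : (l₁ ++ l₂.reverse).IsChain G.Adj := by
    rw [List.isChain_append]
    refine ⟨hch'.1, ?_, ?_⟩
    · rw [List.isChain_reverse]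
      have : (fun a b => G.Adj b a) = G.Adj := by ext a b; exact G.adj_comm b a
      rw [this]
      exact hch'.2.1
    · intro a ha b hb
      rw [h2] at ha
      rw [List.head?_reverse, h4] at hb
      simp at ha hb
      subst ha hb
      exact hyt
  have hperm : (l₁ ++ l₂.reverse).Perm (l₁ ++ l₂) := (List.reverse_perm l₂).append_left l₁
  have hcn : (l₁ ++ l₂.reverse).Nodup := hperm.nodup_iff.mpr hnd
  have hvc : v ∈ l₁ ++ l₂.reverse := hperm.mem_iff.mpr hv
  have hhead : (l₁ ++ l₂.reverse).head? = some x := by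
    rw [List.head?_append, h1]; rfl
  have hlast : (l₁ ++ l₂.reverse).getLast? = some z := by
    rw [List.getLast?_append, List.getLast?_reverse, h3]; rfl
  obtain ⟨c₁, c₂, hcc⟩ := List.append_of_mem hvc
  rw [hcc] at hc hcn hhead hlast hperm
  have hc' := List.isChain_append.mp hc
  have hp2 : ((v :: c₂) ++ c₁).Perm (l₁ ++ l₂) := List.perm_append_comm.trans hperm
  have hP : PL G ((v :: c₂) ++ c₁) := by
    refine ⟨?_, hp2.nodup_iff.mpr hnd⟩
    rw [List.isChain_append]
    refine ⟨hc'.2.1, hc'.1, ?_⟩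
    intro a ha b hb
    have ha' : a = z := by
      rw [List.getLast?_append, ha] at hlast
      simpa using hlast
    have hb' : b = x := by
      rw [List.head?_append, hb] at hhead
      simpa using hhead
    subst ha' hb'
    exact hxz.symm
  refine ⟨w :: ((v :: c₂) ++ c₁), hP.cons rfl hwv ?_, ?_, ?_⟩
  · intro hcon
    exact hw (hp2.mem_iff.mp hcon)
  · rw [List.length_cons, hp2.length_eq]
  · intro a ha
    rcases List.mem_cons.mp ha with h | h
    · exact Or.inl h
    · exact Or.inr (hp2.mem_iff.mp h)

/-- pigeonhole: crossing chords in a longest path -/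
lemma crossing (G : SimpleGraph V) (S : Finset V) (p : List V) (m : ℕ) (hm : p.length = m + 1)
    (hp : PL G p) (hS : ∀ a ∈ p, a ∈ S)
    (hx : ∀ w ∈ S, G.Adj (p[0]) w → w ∈ p) (hy : ∀ w ∈ S, G.Adj (p[m]) w → w ∈ p)
    (hdeg : m < dg G (p[0]) S + dg G (p[m]) S) :
    ∃ i, ∃ hi : i < m, G.Adj (p[0]) (p[i + 1]) ∧ G.Adj (p[m]) (p[i]) := by
  have hX : dg G (p[0]) S ≤
      ((Finset.range m).filter (fun i => ∃ h : i < m, G.Adj (p[0]) (p[i + 1]))).card := by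
    unfold dg
    apply Finset.card_le_card_of_surjOn (fun i => p.getD (i + 1) p[0])
    intro w hw
    simp only [Finset.coe_filter, Set.mem_ofPred_eq] at hw
    obtain ⟨j, hj, hjw⟩ := List.getElem_of_mem (hx w hw.1 hw.2)
    have hj0 : j ≠ 0 := by
      rintro rfl
      rw [hjw] at hw
      exact G.loopless.irrefl _ hw.2
    obtain ⟨i, rfl⟩ := Nat.exists_eq_succ_of_ne_zero hj0
    refine ⟨i, ?_, ?_⟩
    · simp only [Finset.coe_filter, Set.mem_ofPred_eq, Finset.mem_range]
      refine ⟨by omega, by omega, ?_⟩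
      rw [hjw]; exact hw.2
    · simp only [List.getD_eq_getElem?_getD]
      rw [List.getElem?_eq_getElem hj]
      simpa using hjw
  have hY : dg G (p[m]) S ≤
      ((Finset.range m).filter (fun i => ∃ h : i < m, G.Adj (p[m]) (p[i]))).card := by
    unfold dg
    apply Finset.card_le_card_of_surjOn (fun i => p.getD i p[0])
    intro w hw
    simp only [Finset.coe_filter, Set.mem_ofPred_eq] at hw
    obtain ⟨j, hj, hjw⟩ := List.getElem_of_mem (hy w hw.1 hw.2)
    have hj0 : j ≠ m := by
      rintro rfl
      rw [hjw] at hw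
      exact G.loopless.irrefl _ hw.2
    refine ⟨j, ?_, ?_⟩
    · simp only [Finset.coe_filter, Set.mem_ofPred_eq, Finset.mem_range]
      refine ⟨by omega, by omega, ?_⟩
      rw [hjw]; exact hw.2
    · simp only [List.getD_eq_getElem?_getD]
      rw [List.getElem?_eq_getElem hj]
      simpa using hjw
  by_contra hcon
  have hdisj : Disjoint
      ((Finset.range m).filter (fun i => ∃ h : i < m, G.Adj (p[0]) (p[i + 1])))
      ((Finset.range m).filter (fun i => ∃ h : i < m, G.Adj (p[m]) (p[i]))) := by
    rw [Finset.disjoint_left]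
    intro i h1 h2
    rw [Finset.mem_filter] at h1 h2
    obtain ⟨_, hi, h1⟩ := h1
    obtain ⟨_, _, h2⟩ := h2
    exact hcon ⟨i, hi, h1, h2⟩
  have hun := Finset.card_union_of_disjoint hdisj
  have hle := Finset.card_le_card (Finset.union_subset
    (Finset.filter_subset (fun i => ∃ h : i < m, G.Adj (p[0]) (p[i + 1])) (Finset.range m))
    (Finset.filter_subset (fun i => ∃ h : i < m, G.Adj (p[m]) (p[i])) (Finset.range m)))
  rw [Finset.card_range] at hle
  omega

/-- Erdős–Gallai: no path on `s + 2` vertices inside `S`. -/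
lemma erdos_gallai (G : SimpleGraph V) (s : ℕ) : ∀ (N : ℕ) (S : Finset V), S.card ≤ N →
    (∀ l : List V, PL G l → (∀ a ∈ l, a ∈ S) → l.length ≠ s + 2) → EE G S S ≤ s * S.card := by
  intro N
  induction N with
  | zero =>
    intro S hS _
    have : S = ∅ := Finset.card_eq_zero.mp (by omega)
    simp [this, EE]
  | succ N ih =>
    intro S hS hno
    rcases S.eq_empty_or_nonempty with rfl | ⟨v0, hv0⟩
    · simp [EE]
    by_cases hlow : ∃ v ∈ S, 2 * dg G v S ≤ s
    · obtain ⟨v, hv, hd⟩ := hlow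
      have hc := Finset.card_erase_add_one hv
      have := ih (S.erase v) (by omega)
        (fun l hl hlS => hno l hl (fun a ha => Finset.mem_of_mem_erase (hlS a ha)))
      rw [EE_erase_both G hv, ← hc]
      nlinarith
    push Not at hlow
    -- a longest path
    have hbound : ∀ l : List V, PL G l → (∀ a ∈ l, a ∈ S) → l.length ≤ s + 1 := by
      intro l hl hlS
      by_contra hcon
      refine hno (l.take (s + 2)) ⟨hl.1.take _, hl.2.sublist (List.take_sublist _ _)⟩
        (fun a ha => hlS a (List.mem_of_mem_take ha)) ?_
      rw [List.length_take]; omega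
    obtain ⟨p, ⟨hp, hpS⟩, hmax⟩ : ∃ p : List V, (PL G p ∧ ∀ a ∈ p, a ∈ S) ∧
        ∀ l : List V, PL G l → (∀ a ∈ l, a ∈ S) → l.length ≤ p.length := by
      let Q : ℕ → Prop := fun m => ∃ l : List V, (PL G l ∧ ∀ a ∈ l, a ∈ S) ∧ l.length = m
      have hQ0 : Q 0 := ⟨[], ⟨⟨by simp, by simp⟩, by simp⟩, rfl⟩
      obtain ⟨p, hp, hlen⟩ := Nat.findGreatest_spec (P := Q) (Nat.zero_le (s + 1)) hQ0
      refine ⟨p, hp, fun l hl hlS => ?_⟩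
      rw [hlen]
      exact Nat.le_findGreatest (hbound l hl hlS) ⟨l, ⟨hl, hlS⟩, rfl⟩
    have hplen : 1 ≤ p.length := by
      have := hmax [v0] ⟨by simp, by simp⟩ (by simpa using hv0)
      simpa using this
    obtain ⟨m, hm⟩ : ∃ m, p.length = m + 1 := ⟨p.length - 1, by omega⟩
    have hms := hbound p hp hpS
    have hhead : p.head? = some (p[0]) := by
      rw [List.head?_eq_getElem?, List.getElem?_eq_getElem (by omega)]
    have hlast : p.getLast? = some (p[m]) := by
      rw [List.getLast?_eq_getElem?, List.getElem?_eq_getElem (by omega)]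
      simp [hm]
    have hx : ∀ w ∈ S, G.Adj (p[0]) w → w ∈ p := by
      intro w hw ha
      by_contra hcon
      have := hmax (w :: p) (hp.cons hhead ha.symm hcon) (by
        intro a h
        rcases List.mem_cons.mp h with rfl | h
        · exact hw
        · exact hpS a h)
      simp at this
    have hsym : (fun a b => G.Adj b a) = G.Adj := by ext a b; exact G.adj_comm b a
    have hy : ∀ w ∈ S, G.Adj (p[m]) w → w ∈ p := by
      intro w hw ha
      by_contra hcon
      have hr : PL G p.reverse :=
        ⟨by rw [List.isChain_reverse, hsym]; exact hp.1, List.nodup_reverse.mpr hp.2⟩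
      have := hmax (w :: p.reverse)
        (hr.cons (by rw [List.head?_reverse, hlast]) ha.symm (by simpa using hcon)) (by
        intro a h
        rcases List.mem_cons.mp h with rfl | h
        · exact hw
        · exact hpS a (by simpa using h))
      simp at this
    obtain ⟨i, hi, hc1, hc2⟩ := crossing G S p m hm hp hpS hx hy (by
      have h1 := hlow (p[0]) (hpS _ (List.getElem_mem _))
      have h2 := hlow (p[m]) (hpS _ (List.getElem_mem _))
      omega)
    have hsplit : p.take (i + 1) ++ p.drop (i + 1) = p := List.take_append_drop _ _
    have hclosed : ∀ v ∈ p, ∀ w ∈ S, G.Adj v w → w ∈ p := by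
      intro v hv w hw hvw
      by_contra hcon
      obtain ⟨l, hl, hlen, hmem⟩ := longer_path G (p.take (i + 1)) (p.drop (i + 1))
        (p[0]) (p[i]) (p[i + 1]) (p[m]) w v (by rw [hsplit]; exact hp)
        (by rw [List.head?_take]; simp [hhead])
        (by
          rw [List.getLast?_eq_getElem?, List.length_take, List.getElem?_take,
            List.getElem?_eq_getElem (by omega)]
          have : min (i + 1) p.length - 1 = i := by omega
          simp [this])
        (by rw [List.head?_drop, List.getElem?_eq_getElem])
        (by rw [List.getLast?_drop, if_neg (by omega), hlast])
        hc1 hc2.symm (by rw [hsplit]; exact hcon) (by rw [hsplit]; exact hv) hvw.symm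
      rw [hsplit] at hlen hmem
      have := hmax l hl (by
        intro a ha
        rcases hmem a ha with rfl | h
        · exact hw
        · exact hpS a h)
      omega
    have hTS : p.toFinset ⊆ S := by
      intro a ha
      exact hpS a (List.mem_toFinset.mp ha)
    have hTc : p.toFinset.card = m + 1 := by
      rw [List.toFinset_card_of_nodup hp.2, hm]
    have hdis : Disjoint p.toFinset (S \ p.toFinset) := Finset.disjoint_sdiff
    have hun : p.toFinset ∪ (S \ p.toFinset) = S := Finset.union_sdiff_of_subset hTS
    have hcard := Finset.card_union_of_disjoint hdis
    rw [hun] at hcard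
    have hzero : EE G p.toFinset (S \ p.toFinset) = 0 := by
      have := EE_le G p.toFinset (S \ p.toFinset) 0 (by
        intro v hv
        unfold dg
        rw [Nat.le_zero, Finset.card_eq_zero, Finset.filter_eq_empty_iff]
        intro w hw hadj
        rw [Finset.mem_sdiff] at hw
        exact hw.2 (List.mem_toFinset.mpr
          (hclosed v (List.mem_toFinset.mp hv) w hw.1 hadj)))
      omega
    have hEE : EE G S S = EE G p.toFinset p.toFinset +
        EE G (S \ p.toFinset) (S \ p.toFinset) := by
      have e1 : EE G S S = EE G p.toFinset S + EE G (S \ p.toFinset) S := by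
        conv_lhs => rw [← hun, EE_union_left G _ hdis, hun]
      have e2 : EE G p.toFinset S = EE G p.toFinset p.toFinset
          + EE G p.toFinset (S \ p.toFinset) := by
        rw [← EE_union_right G _ hdis, hun]
      have e3 : EE G (S \ p.toFinset) S = EE G (S \ p.toFinset) p.toFinset
          + EE G (S \ p.toFinset) (S \ p.toFinset) := by
        rw [← EE_union_right G _ hdis, hun]
      rw [EE_comm G (S \ p.toFinset) p.toFinset] at e3
      omega
    have hT : EE G p.toFinset p.toFinset ≤ (m + 1) * m := by
      rw [← hTc]
      conv_rhs => rw [hTc]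
      exact hTc ▸ EE_le G p.toFinset p.toFinset m (fun v hv => by
        have := dg_lt_card G hv
        omega)
    have hI := ih (S \ p.toFinset) (by omega)
      (fun l hl hlS => hno l hl (fun a ha => (Finset.mem_sdiff.mp (hlS a ha)).1))
    rw [hEE, hcard, hTc]
    have : m ≤ s := by omega
    nlinarith

end ErdosGallai

section Main

set_option linter.unusedSectionVars false

lemma floor_bound (n : ℕ) : (n : ℤ) ^ 2 ≤ 4 * ((n ^ 2 / 4 : ℕ) : ℤ) + 1 := by
  have : n ^ 2 ≤ 4 * (n ^ 2 / 4) + 1 := by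
    rcases Nat.even_or_odd' n with ⟨c, hc | hc⟩
    · have : n ^ 2 = 4 * (c * c) := by rw [hc]; ring
      omega
    · have : n ^ 2 = 4 * (c * c + c) + 1 := by rw [hc]; ring
      omega
  exact_mod_cast this

lemma floor_ge (n : ℕ) (s : ℤ) : s * (n - s) ≤ ((n ^ 2 / 4 : ℕ) : ℤ) := by
  have h1 : 4 * (s * (n - s)) ≤ (n : ℤ) ^ 2 := by nlinarith [sq_nonneg ((n : ℤ) - 2 * s)]
  have h2 : (n : ℤ) ^ 2 ≤ 4 * ((n ^ 2 / 4 : ℕ) : ℤ) + 3 := by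
    have : n ^ 2 ≤ 4 * (n ^ 2 / 4) + 3 := by omega
    exact_mod_cast this
  omega

lemma even_arith (n k a b P Q : ℕ) (hk : 1 ≤ k) (hn : 14 * k + 14 ≤ n) (hab : a + b + 1 = n)
    (hW : n ^ 2 / 4 + 1 ≤ a + P + Q) (h1 : P ≤ (2 * k - 1) * a) (h2 : Q ≤ k * (a + b)) : False := by
  have hf := floor_bound n
  obtain ⟨j, rfl⟩ : ∃ j, k = j + 1 := ⟨k - 1, by omega⟩
  have e : 2 * (j + 1) - 1 = 2 * j + 1 := by omega
  rw [e] at h1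
  generalize n ^ 2 / 4 = F at *
  zify at *
  have ha : (a : ℤ) ≤ n := by linarith
  have hb : (b : ℤ) = n - 1 - a := by linarith
  rw [hb] at h2
  have h3 : (n : ℤ) ^ 2 + 3 ≤ 4 * (a + (2 * j + 1) * a + (j + 1) * (n - 1)) := by nlinarith
  nlinarith [mul_nonneg (sub_nonneg.mpr ha) (by positivity : (0 : ℤ) ≤ j),
    mul_nonneg (sub_nonneg.mpr hn) (by positivity : (0 : ℤ) ≤ n)]

lemma odd_arith_final (n j a : ℤ) (hj0 : 0 ≤ j) (ha0 : 0 ≤ a) (hn : 14 * (j + 1) + 7 ≤ n)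
    (P1 : n ^ 2 + 3 ≤ 4 * (a + 2 * j * a) + (n - 1 - a + 2 * j) ^ 2
        + 4 * ((j + 1) * (a - 2 * j)))
    (P2 : n ^ 2 + 3 ≤ 4 * (a + 2 * j * a) + 4 * (a * (n - 1 - a))) : False := by
  have hn0 : 0 ≤ n := by linarith
  have r1 := mul_nonneg (sub_nonneg.mpr hn) ha0
  have r2 := mul_nonneg (sub_nonneg.mpr hn) hn0
  have r3 := mul_nonneg (sub_nonneg.mpr hn) hj0
  have small : 8 * a ≤ n := by
    by_contra hcon
    push Not at hcon
    have r4 := mul_nonneg (sub_nonneg.mpr hcon.le) hn0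
    have r5 := mul_nonneg (sub_nonneg.mpr hcon.le) hj0
    nlinarith
  have r6 := mul_nonneg (sub_nonneg.mpr small) hn0
  have r7 := mul_nonneg (sub_nonneg.mpr small) ha0
  nlinarith

lemma odd_arith (n k a b P Q s z a0 b0 : ℕ) (hk : 1 ≤ k) (hn : 14 * k + 7 ≤ n)
    (hab : a + b + 1 = n) (hW : n ^ 2 / 4 + 1 ≤ a + P + Q) (h1 : P ≤ (2 * k - 2) * a)
    (h1' : P ≤ (2 * k - 2) * z)
    (h2 : Q + k * (a0 + b0) ≤ a0 * b0 + k * (a + b)) (h3 : Q ≤ a * b)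
    (h4 : Q ≤ s * b + z * (b - b0)) (hsz : s + z = a) (hs : a0 ≤ s) (hb0 : b0 ≤ b)
    (hcore : a0 = 0 ∨ k ≤ b0) : False := by
  have hf := floor_bound n
  have hg := floor_ge n s
  obtain ⟨j, rfl⟩ : ∃ j, k = j + 1 := ⟨k - 1, by omega⟩
  obtain ⟨d, rfl⟩ : ∃ d, b = b0 + d := ⟨b - b0, by omega⟩
  have e : 2 * (j + 1) - 2 = 2 * j := by omega
  have e' : b0 + d - b0 = d := by omega
  rw [e] at h1 h1'
  rw [e'] at h4
  generalize n ^ 2 / 4 = F at *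
  clear e e'
  have hj0 : (0 : ℤ) ≤ j := by positivity
  have ha0 : (0 : ℤ) ≤ a := by positivity
  have hn0 : (0 : ℤ) ≤ n := by positivity
  have hz0 : (0 : ℤ) ≤ z := by positivity
  have hd0 : (0 : ℤ) ≤ d := by positivity
  have hbb0 : (0 : ℤ) ≤ b0 := by positivity
  zify at *
  have ha : (a : ℤ) ≤ n := by linarith
  rcases hcore with h0 | hkb
  · rw [h0] at h2
    have hq : (Q : ℤ) ≤ (j + 1) * (n - 1) := by nlinarith
    have h5 : (n : ℤ) ^ 2 + 3 ≤ 4 * (a + 2 * j * a + (j + 1) * (n - 1)) := by nlinarith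
    nlinarith [mul_nonneg (sub_nonneg.mpr ha) hj0, mul_nonneg (sub_nonneg.mpr hn) hn0]
  rcases le_or_gt ((d : ℤ) + 2 * j + 1) s with hc | hc
  · have hmul := mul_nonneg hz0 (sub_nonneg.mpr hc)
    have hb : (b0 : ℤ) + d = n - 1 - s - z := by linarith
    rw [hb] at h4
    nlinarith
  · have hc' : (s : ℤ) ≤ d + 2 * j := by omega
    have m1 := mul_nonneg (sub_nonneg.mpr hs) (sub_nonneg.mpr hkb)
    have m2 := mul_nonneg (sub_nonneg.mpr hc') (sub_nonneg.mpr hkb)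
    have q1 : (Q : ℤ) ≤ (d + 2 * j) * b0 + (j + 1) * (a - 2 * j) := by nlinarith
    have q2 : 4 * (((d : ℤ) + 2 * j) * b0) ≤ (n - 1 - a + 2 * j) ^ 2 := by
      have hb : (n : ℤ) - 1 - a = b0 + d := by linarith
      rw [hb]
      nlinarith [sq_nonneg ((d : ℤ) + 2 * j - b0)]
    have P1 : (n : ℤ) ^ 2 + 3 ≤ 4 * (a + 2 * j * a) + (n - 1 - a + 2 * j) ^ 2
        + 4 * ((j + 1) * (a - 2 * j)) := by linarith
    have P2 : (n : ℤ) ^ 2 + 3 ≤ 4 * (a + 2 * j * a) + 4 * (a * (n - 1 - a)) := by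
      have hb : (n : ℤ) - 1 - a = b0 + d := by linarith
      rw [hb]
      linarith
    exact odd_arith_final n j a hj0 ha0 hn P1 P2

variable {V : Type*} [DecidableEq V]

lemma main_path (G : SimpleGraph V) (n t : ℕ) (A B : Finset V) (hdis : Disjoint A B)
    (hcard : A.card + B.card + 1 = n) (hW : n ^ 2 / 4 + 1 ≤ A.card + EE G A A + EE G A B)
    (ht : 3 ≤ t) (htn : 7 * t ≤ n) :
    ∃ l : List V, PL G l ∧ l.length + 1 = t ∧ (∃ x ∈ A, l.head? = some x) ∧
      (∃ y ∈ A, l.getLast? = some y) ∧ ∀ a ∈ l, a ∈ A ∨ a ∈ B := by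
  by_contra hno
  push Not at hno
  have hAA : ∀ l : List V, PL G l → (∀ a ∈ l, a ∈ A) → l.length ≠ (t - 3) + 2 := by
    intro l hl hlA hlen
    have hne : l ≠ [] := by rintro rfl; simp at hlen
    obtain ⟨a, ha, ha'⟩ := hno l hl (by omega)
      ⟨l.head hne, hlA _ (List.head_mem hne), List.head?_eq_some_head hne⟩
      ⟨l.getLast hne, hlA _ (List.getLast_mem hne), List.getLast?_eq_some_getLast hne⟩
    exact ha'.1 (hlA a ha)
  have hEG := erdos_gallai G (t - 3) _ A le_rfl hAA
  obtain ⟨k, hk⟩ : ∃ k, t = 2 * k + 1 ∨ t = 2 * k + 2 := ⟨(t - 1) / 2, by omega⟩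
  have hk1 : 1 ≤ k := by omega
  obtain ⟨A0, hA0, B0, hB0, hA, hB, hcore⟩ := exists_core G k _ A B rfl
  have hdis0 : Disjoint A0 B0 := Finset.disjoint_of_subset_left hA0
    (Finset.disjoint_of_subset_right hB0 hdis)
  rcases hk with hk | hk
  · -- odd cycle
    have e3 : t - 3 = 2 * k - 2 := by omega
    rw [e3] at hEG hAA
    have hS : ∀ s ∈ A, dg G s B0 ≠ 0 → ∀ v ∈ A, ¬ G.Adj s v := by
      intro s hs hd v hv hsv
      have hP0 : PL G [s, v] := ⟨by simpa using hsv, by simpa using hsv.ne⟩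
      rcases Nat.lt_or_ge k 2 with hk2 | hk2
      · obtain ⟨a, ha, ha'⟩ := hno [s, v] hP0 (by simp; omega) ⟨s, hs, rfl⟩ ⟨v, hv, rfl⟩
        simp only [List.mem_cons, List.not_mem_nil, or_false] at ha
        rcases ha with rfl | rfl
        · exact ha'.1 hs
        · exact ha'.1 hv
      · obtain ⟨b, hb, hsb, -⟩ := exists_nb_notMem G s B0 ∅ (by simp; omega)
        have hbA : ∀ x ∈ A, x ≠ b := by
          rintro x hx rfl
          exact Finset.disjoint_left.mp hdis hx (hB0 hb)
        have hcd : (A0 ∩ {s, v}).card ≤ 2 :=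
          (Finset.card_le_card Finset.inter_subset_right).trans Finset.card_le_two
        obtain ⟨c, hc, hbc, hcn⟩ := exists_nb_notMem G b A0 {s, v} (by
          have := hB b hb
          omega)
        simp only [Finset.mem_insert, Finset.mem_singleton, not_or] at hcn
        have hP1 : PL G [b, s, v] := hP0.cons rfl hsb.symm
          (by simp [(hbA s hs).symm, (hbA v hv).symm])
        have hP2 : PL G [c, b, s, v] := hP1.cons rfl hbc.symm
          (by simp [hbc.ne', hcn.1, hcn.2])
        obtain ⟨l, q1, ⟨a', ha', q2⟩, q3, q4, q5⟩ := alt_path G k A0 B0 hdis0 hA hB (k - 2)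
          [c, b, s, v] c hP2 rfl hc
          (by
            have : B0 ∩ [c, b, s, v].toFinset ⊆ {b} := by
              intro x hx
              simp only [Finset.mem_inter, List.mem_toFinset, List.mem_cons,
                List.not_mem_nil, or_false, Finset.mem_singleton] at hx ⊢
              rcases hx with ⟨hx, rfl | rfl | rfl | rfl⟩
              · exact absurd hx (Finset.disjoint_left.mp hdis0 hc)
              · rfl
              · exact absurd (hB0 hx) (Finset.disjoint_left.mp hdis hs)
              · exact absurd (hB0 hx) (Finset.disjoint_left.mp hdis hv)
            have := Finset.card_le_card this
            rw [Finset.card_singleton] at this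
            omega)
          (by
            have : A0 ∩ [c, b, s, v].toFinset ⊆ {c, s, v} := by
              intro x hx
              simp only [Finset.mem_inter, List.mem_toFinset, List.mem_cons,
                List.not_mem_nil, or_false, Finset.mem_singleton, Finset.mem_insert] at hx ⊢
              rcases hx with ⟨hx, rfl | rfl | rfl | rfl⟩
              · simp
              · exact absurd hb (Finset.disjoint_left.mp hdis0 hx)
              · simp
              · simp
            have := (Finset.card_le_card this).trans Finset.card_le_three
            omega)
        obtain ⟨a, ha, hn1⟩ := hno l q1 (by rw [q4]; simp; omega) ⟨a', hA0 ha', q2⟩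
          ⟨v, hv, by rw [q3]; rfl⟩
        rcases q5 a ha with h | h | h
        · simp only [List.mem_cons, List.not_mem_nil, or_false] at h
          rcases h with rfl | rfl | rfl | rfl
          · exact hn1.1 (hA0 hc)
          · exact hn1.2 (hB0 hb)
          · exact hn1.1 hs
          · exact hn1.1 hv
        · exact hn1.1 (hA0 h)
        · exact hn1.2 (hB0 h)
    set S := A.filter (fun v => dg G v B0 ≠ 0) with hSdef
    set Z := A.filter (fun v => ¬ dg G v B0 ≠ 0) with hZdef
    have hun : S ∪ Z = A := Finset.filter_union_filter_not_eq _ _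
    have hdSZ : Disjoint S Z := Finset.disjoint_filter_filter_not _ _ _
    have hcSZ := Finset.card_union_of_disjoint hdSZ
    rw [hun] at hcSZ
    have hSA : EE G S A = 0 := by
      have := EE_le G S A 0 (by
        intro s hs
        rw [hSdef, Finset.mem_filter] at hs
        unfold dg
        rw [Nat.le_zero, Finset.card_eq_zero, Finset.filter_eq_empty_iff]
        exact fun v hv => hS s hs.1 hs.2 v hv)
      omega
    have hEAZ : EE G A A = EE G Z Z := by
      have e1 : EE G A A = EE G S A + EE G Z A := by
        rw [← EE_union_left G A hdSZ, hun]
      have e2 : EE G Z A = EE G Z S + EE G Z Z := by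
        rw [← EE_union_right G Z hdSZ, hun]
      have e3 : EE G S A = EE G S S + EE G S Z := by
        rw [← EE_union_right G S hdSZ, hun]
      have e4 := EE_comm G S Z
      omega
    have hZ := erdos_gallai G (2 * k - 2) _ Z le_rfl (fun l hl hlZ =>
      hAA l hl (fun a ha => (Finset.mem_filter.mp (hlZ a ha)).1))
    have hQ : EE G A B ≤ S.card * B.card + Z.card * (B.card - B0.card) := by
      have e1 : EE G A B = EE G S B + EE G Z B := by
        rw [← EE_union_left G B hdSZ, hun]
      have e2 := EE_le G S B B.card (fun v _ => dg_le_card G v B)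
      have e3 := EE_le G Z B (B.card - B0.card) (by
        intro v hv
        rw [hZdef, Finset.mem_filter, not_not] at hv
        have hu : B0 ∪ (B \ B0) = B := Finset.union_sdiff_of_subset hB0
        have := dg_union G v (Finset.disjoint_sdiff (s := B0) (t := B))
        rw [hu, hv.2, zero_add] at this
        rw [this, ← Finset.card_sdiff_of_subset hB0]
        exact dg_le_card G v _)
      omega
    refine odd_arith n k A.card B.card (EE G A A) (EE G A B) S.card Z.card A0.card B0.card hk1
      (by omega) hcard hW hEG (by rw [hEAZ]; exact hZ) hcore
      (EE_le G A B B.card (fun v _ => dg_le_card G v B)) hQ hcSZ.symm ?_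
      (Finset.card_le_card hB0) ?_
    · apply Finset.card_le_card
      intro x hx
      rw [hSdef, Finset.mem_filter]
      have := hA x hx
      exact ⟨hA0 hx, by omega⟩
    · rcases A0.eq_empty_or_nonempty with h | ⟨x, hx⟩
      · left; simp [h]
      · right; exact (hA x hx).trans (dg_le_card G x B0)
  · -- even cycle
    have e3 : t - 3 = 2 * k - 1 := by omega
    rw [e3] at hEG
    rcases A0.eq_empty_or_nonempty with h | ⟨x, hx⟩
    · refine even_arith n k A.card B.card (EE G A A) (EE G A B) hk1 (by omega) hcard hW hEG ?_
      rw [h] at hcore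
      simp only [Finset.card_empty, zero_mul, zero_add] at hcore
      omega
    · obtain ⟨l, q1, ⟨a', ha', q2⟩, q3, q4, q5⟩ := alt_path G k A0 B0 hdis0 hA hB k
        [x] x ⟨by simp, by simp⟩ rfl hx
        (by
          have : B0 ∩ [x].toFinset = ∅ := by
            simp [Finset.disjoint_left.mp hdis0 hx]
          rw [this]; simp)
        (by
          have : (A0 ∩ [x].toFinset).card ≤ 1 :=
            (Finset.card_le_card Finset.inter_subset_right).trans (by simp)
          omega)
      obtain ⟨a, ha, hn1⟩ := hno l q1 (by rw [q4]; simp; omega) ⟨a', hA0 ha', q2⟩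
        ⟨x, hA0 hx, by rw [q3]; rfl⟩
      rcases q5 a ha with h | h | h
      · simp only [List.mem_cons, List.not_mem_nil, or_false] at h
        subst h
        exact hn1.1 (hA0 hx)
      · exact hn1.1 (hA0 h)
      · exact hn1.2 (hB0 h)

end Main

/-- Corollary 1.8: a graph on `n` vertices with `ρ(G) > ρ(T_{n,2})` contains a cycle of
every length `t` with `3 ≤ t ≤ n/7`. -/
theorem stmt5 (n : ℕ) (hn : 0 < n) (G : SimpleGraph (Fin n))
    (hρ : adjSpectralRadius (turanGraph n 2) < adjSpectralRadius G) :
    ∀ t : ℕ, 3 ≤ t → 7 * t ≤ n → Contains G (cycleGraph t) := by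
  intro t ht htn
  obtain ⟨u, hu⟩ := exists_vertex n G (n ^ 2 / 4)
    (lt_of_le_of_lt (turan_radius_ge n (by omega)) hρ)
  set A : Finset (Fin n) := Finset.univ.filter (G.Adj u) with hA
  set B : Finset (Fin n) := (Finset.univ \ A).erase u with hB
  have huA : u ∉ A := by simp [hA]
  have huB : u ∉ B := by simp [hB]
  have hdis : Disjoint A B := Finset.disjoint_of_subset_right (Finset.erase_subset _ _)
    Finset.disjoint_sdiff
  have huniv : (A ∪ B) ∪ {u} = Finset.univ := by
    ext x
    simp only [hB, Finset.mem_union, Finset.mem_erase, Finset.mem_sdiff, Finset.mem_univ,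
      true_and, Finset.mem_singleton, iff_true]
    tauto
  have hd2 : Disjoint (A ∪ B) {u} := by simp [huA, huB]
  have hcard : A.card + B.card + 1 = n := by
    have := Finset.card_union_of_disjoint hd2
    rw [huniv, Finset.card_univ, Fintype.card_fin, Finset.card_union_of_disjoint hdis] at this
    simpa using this.symm
  have hnb : G.neighborFinset u = A := by
    ext x; simp [hA]
  have hdeg : ∀ v ∈ A, G.degree v = 1 + dg G v A + dg G v B := by
    intro v hv
    have h1 : G.degree v = dg G v Finset.univ := by
      unfold dg
      rw [← SimpleGraph.card_neighborFinset_eq_degree]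
      congr 1
      ext x; simp
    have h2 : dg G v {u} = 1 := by
      unfold dg
      have : G.Adj v u := by
        rw [hA, Finset.mem_filter] at hv
        exact hv.2.symm
      rw [Finset.filter_singleton, if_pos this, Finset.card_singleton]
    rw [h1, ← huniv, dg_union G v hd2, dg_union G v hdis, h2]
    ring
  rw [hnb, Finset.sum_congr rfl hdeg, Finset.sum_add_distrib, Finset.sum_add_distrib] at hu
  obtain ⟨l, hl, hlen, ⟨x, hx, hx'⟩, ⟨y, hy, hy'⟩, hmem⟩ := main_path G n t A B hdis hcard (by
    unfold EE
    simp only [Finset.sum_const, smul_eq_mul, mul_one] at hu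
    omega) ht htn
  have hul : u ∉ l := by
    intro h
    rcases hmem u h with h | h
    · exact huA h
    · exact huB h
  have hux : G.Adj u x := (Finset.mem_filter.mp hx).2
  have huy : G.Adj u y := (Finset.mem_filter.mp hy).2
  have hfin := contains_of_list G (u :: l) u y (hl.cons hx' hux hul) rfl (by
    rw [List.getLast?_cons, hy']; rfl) huy
  rw [List.length_cons, hlen] at hfin
  exact hfin
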